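/- arXiv:math/0609258 — 2 statements merged into one kernel-verified Lean document; each statement's English description precedes it below -/
import Mathlib

section
/- Let n ≥ 1 and let λ be a partition of n. There is exactly one isomorphism class of irreducible finite-dimensional complex representations V of the symmetric group S_n such that both ⟨φ_λ, χ_V⟩ ≠ 0 and ⟨ψ_λ, χ_V⟩ ≠ 0, where χ_V is the character of V; moreover, for this unique V one has ⟨φ_λ, χ_V⟩ = 1 and ⟨ψ_λ, χ_V⟩ = 1. (In other words, the induced representations Ind_{H(λ)}^{S_n} 1 and Ind_{V(λ)}^{S_n} sgn have exactly one common irreducible constituent, which occurs with multiplicity one in each.) -/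
open scoped Classical

noncomputable section

open MvPolynomial

/-- Partial sums of the row lengths of a Young diagram. -/
def rowPartialSum (lam : YoungDiagram) (i : ℕ) : ℕ :=
  ∑ j ∈ Finset.range i, lam.rowLen j

/-- The (0-indexed) row of the canonical tableau of shape `lam` containing the entry `m`
(the entries `0,…,n-1` fill the cells consecutively row by row). -/
def rowIndex (lam : YoungDiagram) (m : ℕ) : ℕ :=
  ((Finset.range (m + 1)).filter fun i => rowPartialSum lam (i + 1) ≤ m).card

/-- The Young subgroup `H(λ) ≤ S_n`: permutations preserving each row of the canonical
tableau of shape `λ`. -/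
def youngH (n : ℕ) (lam : YoungDiagram) : Subgroup (Equiv.Perm (Fin n)) where
  carrier := {g | ∀ m : Fin n, rowIndex lam (g m) = rowIndex lam m}
  one_mem' := by intro m; simp
  mul_mem' := by
    intro a b ha hb m
    have h1 := ha (b m)
    have h2 := hb m
    simpa [Equiv.Perm.mul_apply] using h1.trans h2
  inv_mem' := by
    intro a ha m
    simpa using (ha (a⁻¹ m)).symm

/-- The (0-indexed) column of the canonical tableau of shape `lam` containing the entry `m`. -/
def colIndex (lam : YoungDiagram) (m : ℕ) : ℕ :=
  m - rowPartialSum lam (rowIndex lam m)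

/-- The Young subgroup `V(λ) ≤ S_n`: permutations preserving each column of the canonical
tableau of shape `λ`. -/
def youngV (n : ℕ) (lam : YoungDiagram) : Subgroup (Equiv.Perm (Fin n)) where
  carrier := {g | ∀ m : Fin n, colIndex lam (g m) = colIndex lam m}
  one_mem' := by intro m; simp
  mul_mem' := by
    intro a b ha hb m
    have h1 := ha (b m)
    have h2 := hb m
    simpa [Equiv.Perm.mul_apply] using h1.trans h2
  inv_mem' := by
    intro a ha m
    simpa using (ha (a⁻¹ m)).symm

/-- The character of the representation induced from the trivial representation of a
subgroup `H`:  `φ(g) = (1/|H|) · #{x : x⁻¹ g x ∈ H}`. -/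
noncomputable def indTrivChar {G : Type*} [Group G] (H : Subgroup G) (g : G) : ℂ :=
  (Nat.card H : ℂ)⁻¹ * (Nat.card {x : G // x⁻¹ * g * x ∈ H} : ℂ)

/-- The character of the representation induced from the sign representation of a
subgroup `V` of the symmetric group:  `ψ(g) = (1/|V|) · Σ_{x : x⁻¹gx ∈ V} sgn(x⁻¹gx)`. -/
noncomputable def indSgnChar {n : ℕ} (V : Subgroup (Equiv.Perm (Fin n)))
    (g : Equiv.Perm (Fin n)) : ℂ :=
  (Nat.card V : ℂ)⁻¹ *
    ∑ x : Equiv.Perm (Fin n),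
      if x⁻¹ * g * x ∈ V then ((Equiv.Perm.sign (x⁻¹ * g * x) : ℤ) : ℂ) else 0

/-- The inner product of class functions on a finite group:
`⟨a,b⟩ = (1/|G|) Σ_g a g * conj (b g)`. -/
noncomputable def innerChar {G : Type*} [Group G] [Fintype G] (a b : G → ℂ) : ℂ :=
  (Fintype.card G : ℂ)⁻¹ * ∑ g : G, a g * (starRingEnd ℂ) (b g)

theorem rps_mono (lam : YoungDiagram) : Monotone (rowPartialSum lam) := by
  refine monotone_nat_of_le_succ fun i => ?_
  simp [rowPartialSum, Finset.sum_range_succ]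

theorem rps_full (lam : YoungDiagram) (i : ℕ) (h : lam.rowLen i = 0) :
    lam.card ≤ rowPartialSum lam i := by
  have : lam.cells ⊆ (Finset.range i).biUnion fun j => lam.row j := by
    intro x hx
    simp only [Finset.mem_biUnion, Finset.mem_range, YoungDiagram.mem_row_iff]
    refine ⟨x.1, ?_, (YoungDiagram.mem_cells _).1 hx, rfl⟩
    by_contra hlt
    have h1 : (x.1, x.2) ∈ lam := (YoungDiagram.mem_cells _).1 hx
    rw [YoungDiagram.mem_iff_lt_rowLen] at h1
    have := lam.rowLen_anti i x.1 (by omega)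
    omega
  refine (Finset.card_le_card this).trans (Finset.card_biUnion_le.trans ?_)
  simp [rowPartialSum, YoungDiagram.rowLen_eq_card]

theorem rps_lt (lam : YoungDiagram) (m : ℕ) (hm : m < lam.card) :
    m < rowPartialSum lam (m + 1) := by
  by_contra hle
  have hz : ∃ i ∈ Finset.range (m + 1), lam.rowLen i = 0 := by
    by_contra hcon
    push Not at hcon
    have : ∑ j ∈ Finset.range (m + 1), 1 ≤ rowPartialSum lam (m + 1) :=
      Finset.sum_le_sum fun i hi => Nat.one_le_iff_ne_zero.2 (hcon i hi)
    simp at this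
    omega
  obtain ⟨i, hi, h0⟩ := hz
  have h1 := rps_full lam i h0
  have h2 := rps_mono lam (Finset.mem_range.1 hi).le
  omega

theorem rowIndex_spec (lam : YoungDiagram) (m : ℕ) (hm : m < lam.card) :
    rowPartialSum lam (rowIndex lam m) ≤ m ∧ m < rowPartialSum lam (rowIndex lam m + 1) := by
  have hex : ∃ k, m < rowPartialSum lam (k + 1) := ⟨m, rps_lt lam m hm⟩
  have hk : rowIndex lam m = Nat.find hex := by
    have : ((Finset.range (m + 1)).filter fun i => rowPartialSum lam (i + 1) ≤ m)
        = Finset.range (Nat.find hex) := by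
      ext i
      simp only [Finset.mem_filter, Finset.mem_range, Nat.lt_find_iff, not_lt]
      constructor
      · rintro ⟨-, h⟩ j hj
        exact (rps_mono lam (by omega)).trans h
      · intro h
        refine ⟨?_, h i le_rfl⟩
        by_contra hlt
        have := h m (by omega)
        have := rps_lt lam m hm
        omega
    rw [rowIndex, this, Finset.card_range]
  rw [hk]
  refine ⟨?_, Nat.find_spec hex⟩
  rcases h : Nat.find hex with _ | k
  · simp [rowPartialSum]
  · have := Nat.find_min hex (m := k) (by omega)
    omega

theorem cell_mem (lam : YoungDiagram) (m : ℕ) (hm : m < lam.card) :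
    (rowIndex lam m, colIndex lam m) ∈ lam := by
  rw [YoungDiagram.mem_iff_lt_rowLen]
  have h := rowIndex_spec lam m hm
  have h2 : rowPartialSum lam (rowIndex lam m + 1) =
    rowPartialSum lam (rowIndex lam m) + lam.rowLen (rowIndex lam m) := by
      simp [rowPartialSum, Finset.sum_range_succ]
  unfold colIndex
  omega

theorem cell_inj (lam : YoungDiagram) (m m' : ℕ) (hm : m < lam.card) (hm' : m' < lam.card)
    (hr : rowIndex lam m = rowIndex lam m') (hc : colIndex lam m = colIndex lam m') : m = m' := by
  have h := rowIndex_spec lam m hm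
  have h' := rowIndex_spec lam m' hm'
  unfold colIndex at hc
  rw [hr] at hc h
  omega

/-- von Neumann's lemma. -/
theorem von_neumann (n : ℕ) (lam : YoungDiagram) (hlam : lam.card = n)
    (g : Equiv.Perm (Fin n))
    (hg : ∀ x y : Fin n, x ≠ y → colIndex lam x = colIndex lam y →
      rowIndex lam (g x) ≠ rowIndex lam (g y)) :
    ∃ h ∈ youngH n lam, ∃ v ∈ youngV n lam, g = h * v := by
  subst hlam
  set e : Fin lam.card → ℕ × ℕ := fun x => (rowIndex lam x, colIndex lam x) with he
  set f : Fin lam.card → ℕ × ℕ := fun x => (rowIndex lam (g x), colIndex lam x) with hf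
  have einj : Function.Injective e := fun x y hxy =>
    Fin.ext (cell_inj lam x y x.2 y.2 (congrArg Prod.fst hxy) (congrArg Prod.snd hxy))
  have finj : Function.Injective f := by
    intro x y hxy
    by_contra hne
    exact hg x y hne (congrArg Prod.snd hxy) (congrArg Prod.fst hxy)
  have ecells : Finset.univ.image e = lam.cells := by
    apply Finset.eq_of_subset_of_card_le
    · intro p hp
      obtain ⟨x, -, rfl⟩ := Finset.mem_image.1 hp
      exact (YoungDiagram.mem_cells _).2 (cell_mem lam x x.2)
    · rw [Finset.card_image_of_injective _ einj]; simp
  set S := Finset.univ.image f with hS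
  have Scard : S.card = lam.card := by
    rw [hS, Finset.card_image_of_injective _ finj]; simp
  let w : ℕ × ℕ → ℤ := fun p => (p.1 : ℤ) - lam.colLen p.2
  have hsum : ∑ p ∈ S, w p = ∑ p ∈ lam.cells, w p := by
    rw [← ecells, hS, Finset.sum_image finj.injOn, Finset.sum_image einj.injOn]
    simp only [w, he, hf, Finset.sum_sub_distrib]
    congr 1
    exact Equiv.sum_comp g (fun x : Fin lam.card => (rowIndex lam x : ℤ))
  have hsub : lam.cells \ S = ∅ := by
    by_contra hne
    have h1 : ∑ p ∈ S \ lam.cells, w p = ∑ p ∈ lam.cells \ S, w p := by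
      have e1 := Finset.sum_inter_add_sum_sdiff S lam.cells w
      have e2 := Finset.sum_inter_add_sum_sdiff lam.cells S w
      rw [Finset.inter_comm] at e2
      linarith
    have h2 : 0 ≤ ∑ p ∈ S \ lam.cells, w p := by
      refine Finset.sum_nonneg fun p hp => ?_
      have : ¬ (p.1, p.2) ∈ lam := fun h =>
        (Finset.mem_sdiff.1 hp).2 ((YoungDiagram.mem_cells _).2 h)
      rw [YoungDiagram.mem_iff_lt_colLen] at this
      simp only [w]; omega
    have h3 : ∑ p ∈ lam.cells \ S, w p < 0 := by
      refine Finset.sum_neg (fun p hp => ?_) (Finset.nonempty_iff_ne_empty.2 hne)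
      have : (p.1, p.2) ∈ lam := (YoungDiagram.mem_cells _).1 (Finset.mem_sdiff.1 hp).1
      rw [YoungDiagram.mem_iff_lt_colLen] at this
      simp only [w]; omega
    linarith
  have hSe : S = lam.cells :=
    (Finset.eq_of_subset_of_card_le (Finset.sdiff_eq_empty_iff_subset.1 hsub)
      Scard.le).symm
  have hv : ∀ x, ∃ y, e y = f x := by
    intro x
    have : f x ∈ Finset.univ.image e := by
      rw [ecells, ← hSe]; exact Finset.mem_image_of_mem _ (Finset.mem_univ _)
    obtain ⟨y, -, hy⟩ := Finset.mem_image.1 this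
    exact ⟨y, hy⟩
  choose v0 hv0 using hv
  have v0inj : Function.Injective v0 := fun x y hxy => finj (by rw [← hv0, ← hv0, hxy])
  let v : Equiv.Perm (Fin lam.card) :=
    Equiv.ofBijective v0 (Finite.injective_iff_bijective.1 v0inj)
  have hvv : ∀ x, e (v x) = f x := hv0
  refine ⟨g * v⁻¹, ?_, v, ?_, by simp⟩
  · intro m
    have := congrArg Prod.fst (hvv (v⁻¹ m))
    simpa [he, hf] using this.symm
  · intro m
    exact congrArg Prod.snd (hvv m)

theorem H_inf_V (n : ℕ) (lam : YoungDiagram) (hlam : lam.card = n)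
    (g : Equiv.Perm (Fin n)) (h1 : g ∈ youngH n lam) (h2 : g ∈ youngV n lam) : g = 1 := by
  subst hlam
  ext m
  exact cell_inj lam _ _ (g m).2 m.2 (h1 m) (h2 m)

theorem swap_mem_V (n : ℕ) (lam : YoungDiagram) (x y : Fin n)
    (h : colIndex lam x = colIndex lam y) : Equiv.swap x y ∈ youngV n lam := by
  intro m
  rw [Equiv.swap_apply_def]
  split_ifs with h1 h2 <;> simp_all

theorem swap_mem_H (n : ℕ) (lam : YoungDiagram) (x y : Fin n)
    (h : rowIndex lam x = rowIndex lam y) : Equiv.swap x y ∈ youngH n lam := by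
  intro m
  rw [Equiv.swap_apply_def]
  split_ifs with h1 h2 <;> simp_all

/-- The signed subgroup sum in the group algebra. -/
def sgSum {G : Type} [Group G] [Fintype G] (K : Subgroup G) (ε : G →* ℤˣ) : MonoidAlgebra ℂ G :=
  ∑ k : K, MonoidAlgebra.single (k : G) (((ε k : ℤˣ) : ℤ) : ℂ)

theorem eps_sq (u : ℤˣ) : (((u : ℤ) : ℂ)) * ((u : ℤ) : ℂ) = 1 := by
  rcases Int.units_eq_one_or u with h | h <;> simp [h]

theorem single_mul_sgSum {G : Type} [Group G] [Fintype G] (K : Subgroup G) (ε : G →* ℤˣ)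
    (k : G) (hk : k ∈ K) :
    MonoidAlgebra.single k (1 : ℂ) * sgSum K ε = (((ε k : ℤˣ) : ℤ) : ℂ) • sgSum K ε := by
  unfold sgSum
  rw [Finset.mul_sum, Finset.smul_sum]
  rw [← Equiv.sum_comp (Equiv.mulLeft (⟨k, hk⟩ : K))
    (fun x : K => (((ε k : ℤˣ) : ℤ) : ℂ) • MonoidAlgebra.single (x : G) (((ε x : ℤˣ) : ℤ) : ℂ))]
  refine Finset.sum_congr rfl fun x _ => ?_
  have := eps_sq (ε k)
  simp [MonoidAlgebra.single_mul_single, ← mul_assoc, this]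

theorem sgSum_mul_single {G : Type} [Group G] [Fintype G] (K : Subgroup G) (ε : G →* ℤˣ)
    (k : G) (hk : k ∈ K) :
    sgSum K ε * MonoidAlgebra.single k (1 : ℂ) = (((ε k : ℤˣ) : ℤ) : ℂ) • sgSum K ε := by
  unfold sgSum
  rw [Finset.sum_mul, Finset.smul_sum]
  rw [← Equiv.sum_comp (Equiv.mulRight (⟨k, hk⟩ : K))
    (fun x : K => (((ε k : ℤˣ) : ℤ) : ℂ) • MonoidAlgebra.single (x : G) (((ε x : ℤˣ) : ℤ) : ℂ))]
  refine Finset.sum_congr rfl fun x _ => ?_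
  have := eps_sq (ε k)
  simp [MonoidAlgebra.single_mul_single]
  linear_combination (-(((ε x : ℤˣ) : ℤ) : ℂ)) * this

theorem sgSum_sq {G : Type} [Group G] [Fintype G] (K : Subgroup G) (ε : G →* ℤˣ) :
    sgSum K ε * sgSum K ε = (Nat.card K : ℂ) • sgSum K ε := by
  conv_lhs => enter [1]; unfold sgSum
  rw [Finset.sum_mul]
  have : ∀ k : K, MonoidAlgebra.single (k : G) (((ε k : ℤˣ) : ℤ) : ℂ) * sgSum K ε
      = sgSum K ε := by
    intro k
    have h := single_mul_sgSum K ε k k.2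
    have h2 : MonoidAlgebra.single (k : G) (((ε k : ℤˣ) : ℤ) : ℂ)
      = (((ε k : ℤˣ) : ℤ) : ℂ) • MonoidAlgebra.single (k : G) (1 : ℂ) := by simp
    rw [h2, smul_mul_assoc, h, smul_smul, eps_sq, one_smul]
  simp [this, Nat.cast_smul_eq_nsmul]

theorem trace_sgSum {G : Type} [Group G] [Fintype G] (K : Subgroup G) (ε : G →* ℤˣ)
    {W : Type} [AddCommGroup W] [Module ℂ W] [FiniteDimensional ℂ W] (ρ : Representation ℂ G W) :
    (Nat.card K : ℂ)⁻¹ * LinearMap.trace ℂ W (ρ.asAlgebraHom (sgSum K ε)) =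
      (Module.finrank ℂ (LinearMap.range (ρ.asAlgebraHom (sgSum K ε))) : ℂ) := by
  have hK : (Nat.card K : ℂ) ≠ 0 := by exact_mod_cast Nat.card_pos.ne'
  set E := ρ.asAlgebraHom (sgSum K ε) with hE
  have hEE : E * E = (Nat.card K : ℂ) • E := by
    rw [hE, ← map_mul, sgSum_sq, map_smul]
  have hid : IsIdempotentElem ((Nat.card K : ℂ)⁻¹ • E) := by
    rw [IsIdempotentElem, smul_mul_smul_comm, hEE, smul_smul]
    congr 1
    field_simp
  have h := (LinearMap.IsIdempotentElem.isProj_range _ hid).trace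
  rw [LinearMap.range_smul _ _ (inv_ne_zero hK), map_smul, smul_eq_mul] at h
  exact h

/-- Induced character of a sign-type character. -/
def indEps {G : Type} [Group G] [Fintype G] (K : Subgroup G) (ε : G →* ℤˣ) (g : G) : ℂ :=
  (Nat.card K : ℂ)⁻¹ *
    ∑ x : G, if x⁻¹ * g * x ∈ K then (((ε (x⁻¹ * g * x) : ℤˣ) : ℤ) : ℂ) else 0

theorem inner_indEps {G : Type} [Group G] [Fintype G] (K : Subgroup G) (ε : G →* ℤˣ)
    (V : FDRep ℂ G) :
    innerChar (indEps K ε) V.character =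
      (Module.finrank ℂ (LinearMap.range
        (Representation.asAlgebraHom V.ρ (sgSum K ε))) : ℂ) := by
  have h1 : ∀ x : G, ∑ g : G, (if x⁻¹ * g * x ∈ K then (((ε (x⁻¹ * g * x) : ℤˣ) : ℤ) : ℂ) else 0)
      * (starRingEnd ℂ) (V.character g)
      = ∑ k : K, (((ε k : ℤˣ) : ℤ) : ℂ) * (starRingEnd ℂ) (V.character k) := by
    intro x
    rw [← Equiv.sum_comp (MulAut.conj x).toEquiv]
    have : ∀ k : G, x⁻¹ * (x * k * x⁻¹) * x = k := by intro k; group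
    simp only [MulEquiv.toEquiv_eq_coe, EquivLike.coe_coe, MulAut.conj_apply, this,
      FDRep.char_conj, ite_mul, zero_mul]
    rw [← Finset.sum_filter]
    exact Finset.sum_subtype _ (by simp)
      (fun k : G => (((ε k : ℤˣ) : ℤ) : ℂ) * (starRingEnd ℂ) (V.character k))
  have hG : (Fintype.card G : ℂ) ≠ 0 := by exact_mod_cast Fintype.card_ne_zero
  have h2 : innerChar (indEps K ε) V.character = (Nat.card K : ℂ)⁻¹ *
      ∑ k : K, (((ε k : ℤˣ) : ℤ) : ℂ) * (starRingEnd ℂ) (V.character k) := by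
    unfold innerChar indEps
    simp_rw [mul_assoc, Finset.sum_mul]
    rw [← Finset.mul_sum, Finset.sum_comm]
    simp_rw [mul_assoc] at h1
    rw [Finset.sum_congr rfl (fun x _ => h1 x)]
    rw [Finset.sum_const, Finset.card_univ, nsmul_eq_mul]
    field_simp
  have h3 : innerChar (indEps K ε) V.character = (starRingEnd ℂ) ((Nat.card K : ℂ)⁻¹ *
      LinearMap.trace ℂ V (Representation.asAlgebraHom V.ρ (sgSum K ε))) := by
    rw [h2]
    simp [sgSum, map_sum, FDRep.character, Representation.asAlgebraHom_single]
  rw [h3, trace_sgSum]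
  simp

theorem indTriv_eq {G : Type} [Group G] [Fintype G] (K : Subgroup G) :
    indTrivChar K = indEps K 1 := by
  ext g
  simp [indTrivChar, indEps, Fintype.card_subtype]

theorem indSgn_eq {n : ℕ} (K : Subgroup (Equiv.Perm (Fin n))) :
    indSgnChar K = indEps K Equiv.Perm.sign := rfl

theorem cyc {G : Type} [Group G] {W : Type} [AddCommGroup W] [Module ℂ W]
    (ρ : Representation ℂ G W) [ρ.IsIrreducible] (w : W) (hw : w ≠ 0) (y : W) :
    ∃ x : MonoidAlgebra ℂ G, ρ.asAlgebraHom x w = y := by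
  have h := IsSimpleModule.toSpanSingleton_surjective (MonoidAlgebra ℂ G) (M := ρ.asModule)
    (m := ρ.asModuleEquiv.symm w) (by simpa using hw)
  obtain ⟨x, hx⟩ := h (ρ.asModuleEquiv.symm y)
  refine ⟨x, ?_⟩
  have := congrArg ρ.asModuleEquiv hx
  simpa [LinearMap.toSpanSingleton_apply, Representation.asModuleEquiv_map_smul] using this

theorem key_ne {G : Type} [Group G] {W : Type} [AddCommGroup W] [Module ℂ W]
    (ρ : Representation ℂ G W) [ρ.IsIrreducible] (a b : MonoidAlgebra ℂ G)
    (hab : ∀ x, ∃ s : ℂ, a * x * b = s • (a * b))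
    (ha : ρ.asAlgebraHom a ≠ 0) (u : W) (hu : ρ.asAlgebraHom b u ≠ 0) :
    ρ.asAlgebraHom a (ρ.asAlgebraHom b u) ≠ 0 := by
  intro h0
  apply ha
  ext y
  obtain ⟨x, hx⟩ := cyc ρ _ hu y
  obtain ⟨s, hs⟩ := hab x
  have := congrArg (fun z => ρ.asAlgebraHom z u) hs
  simp only [map_mul, Module.End.mul_apply, map_smul, LinearMap.smul_apply, hx, h0] at this
  simpa using this

theorem ranks {G : Type} [Group G] {W : Type} [AddCommGroup W] [Module ℂ W]
    [FiniteDimensional ℂ W]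
    (ρ : Representation ℂ G W) [ρ.IsIrreducible] (a b : MonoidAlgebra ℂ G)
    (hab : ∀ x, ∃ s : ℂ, a * x * b = s • (a * b))
    (ha : ρ.asAlgebraHom a ≠ 0) (hb : ρ.asAlgebraHom b ≠ 0) :
    Module.finrank ℂ (LinearMap.range (ρ.asAlgebraHom a)) = 1 ∧
    Module.finrank ℂ (LinearMap.range (ρ.asAlgebraHom b)) = 1 := by
  obtain ⟨u, hu⟩ : ∃ u, ρ.asAlgebraHom b u ≠ 0 := by
    by_contra hcon; push Not at hcon; exact hb (LinearMap.ext hcon)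
  have hne := key_ne ρ a b hab ha u hu
  have h1 : Module.finrank ℂ (LinearMap.range (ρ.asAlgebraHom a)) = 1 := by
    refine finrank_eq_one (⟨_, LinearMap.mem_range_self _ (ρ.asAlgebraHom b u)⟩) ?_ ?_
    · intro h; exact hne (congrArg Subtype.val h)
    · rintro ⟨_, y, rfl⟩
      obtain ⟨x, hx⟩ := cyc ρ _ hu y
      obtain ⟨s, hs⟩ := hab x
      refine ⟨s, Subtype.ext ?_⟩
      have := congrArg (fun z => ρ.asAlgebraHom z u) hs
      simp only [map_mul, Module.End.mul_apply, map_smul, LinearMap.smul_apply, hx] at this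
      simpa using this.symm
  refine ⟨h1, le_antisymm ?_ ?_⟩
  · rw [← h1]
    let f : LinearMap.range (ρ.asAlgebraHom b) →ₗ[ℂ] LinearMap.range (ρ.asAlgebraHom a) :=
      (ρ.asAlgebraHom a).rangeRestrict ∘ₗ (LinearMap.range (ρ.asAlgebraHom b)).subtype
    refine LinearMap.finrank_le_finrank_of_injective (f := f) ?_
    rw [← LinearMap.ker_eq_bot, LinearMap.ker_eq_bot']
    rintro ⟨_, v, rfl⟩ hm
    by_contra hcon
    refine key_ne ρ a b hab ha v (fun h => hcon (Subtype.ext h)) ?_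
    exact congrArg Subtype.val hm
  · rw [Nat.one_le_iff_ne_zero]
    intro h
    rw [Submodule.finrank_eq_zero, LinearMap.range_eq_bot] at h
    exact hb h

theorem exists_equiv {G : Type} [Group G] {W W' : Type} [AddCommGroup W] [Module ℂ W]
    [AddCommGroup W'] [Module ℂ W']
    (ρ : Representation ℂ G W) [ρ.IsIrreducible]
    (σ : Representation ℂ G W') [σ.IsIrreducible]
    (a b : MonoidAlgebra ℂ G)
    (hab : ∀ x, ∃ s : ℂ, a * x * b = s • (a * b))
    (ha : ρ.asAlgebraHom a ≠ 0) (hb : ρ.asAlgebraHom b ≠ 0)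
    (ha' : σ.asAlgebraHom a ≠ 0) (hb' : σ.asAlgebraHom b ≠ 0) :
    Nonempty (Representation.Equiv ρ σ) := by
  obtain ⟨u, hu⟩ : ∃ u, ρ.asAlgebraHom b u ≠ 0 := by
    by_contra hcon; push Not at hcon; exact hb (LinearMap.ext hcon)
  obtain ⟨u', hu'⟩ : ∃ u, σ.asAlgebraHom b u ≠ 0 := by
    by_contra hcon; push Not at hcon; exact hb' (LinearMap.ext hcon)
  have hne := key_ne ρ a b hab ha u hu
  have hne' := key_ne σ a b hab ha' u' hu'
  set w := ρ.asAlgebraHom b u with hw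
  set w' := σ.asAlgebraHom b u' with hw'
  have hann : ∀ x, ρ.asAlgebraHom x w = 0 → σ.asAlgebraHom x w' = 0 := by
    intro x hx
    by_contra hx'
    obtain ⟨y, hy⟩ := cyc σ _ hx' w'
    obtain ⟨s, hs⟩ := hab (y * x)
    have e1 := congrArg (fun z => ρ.asAlgebraHom z u) hs
    have e2 := congrArg (fun z => σ.asAlgebraHom z u') hs
    simp only [map_mul, Module.End.mul_apply, map_smul, LinearMap.smul_apply, ← hw, hx,
      map_zero] at e1
    simp only [map_mul, Module.End.mul_apply, map_smul, LinearMap.smul_apply, ← hw', hy] at e2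
    have hs0 : s = 0 := by
      rcases smul_eq_zero.1 e1.symm with h | h
      · exact h
      · exact absurd h hne
    rw [hs0, zero_smul] at e2
    exact hne' e2
  let m : ρ.asModule := ρ.asModuleEquiv.symm w
  let m' : σ.asModule := σ.asModuleEquiv.symm w'
  have hm : m ≠ 0 := by simpa [m] using hu
  have hm' : m' ≠ 0 := by simpa [m'] using hu'
  let p := LinearMap.toSpanSingleton (MonoidAlgebra ℂ G) ρ.asModule m
  let q := LinearMap.toSpanSingleton (MonoidAlgebra ℂ G) σ.asModule m'
  have hp : Function.Surjective p := IsSimpleModule.toSpanSingleton_surjective _ hm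
  have hker : LinearMap.ker p ≤ LinearMap.ker q := by
    intro x hx
    rw [LinearMap.mem_ker] at hx ⊢
    have h1 : ρ.asAlgebraHom x w = 0 := by
      have := congrArg ρ.asModuleEquiv hx
      simpa [p, m, LinearMap.toSpanSingleton_apply, Representation.asModuleEquiv_map_smul]
        using this
    apply σ.asModuleEquiv.injective
    simpa [q, m', LinearMap.toSpanSingleton_apply, Representation.asModuleEquiv_map_smul]
      using hann x h1
  let F : ρ.asModule →ₗ[MonoidAlgebra ℂ G] σ.asModule :=
    (LinearMap.ker p).liftQ q hker ∘ₗ (p.quotKerEquivOfSurjective hp).symm.toLinearMap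
  have hF : F ≠ 0 := by
    intro h0
    have h1 : F (p 1) = q 1 := by
      have : (p.quotKerEquivOfSurjective hp).symm (p 1) = Submodule.Quotient.mk 1 := by
        rw [LinearEquiv.symm_apply_eq]; rfl
      simp only [F, LinearMap.comp_apply, LinearEquiv.coe_coe, this]
      rfl
    rw [h0] at h1
    apply hm'
    simpa [q] using h1.symm
  by_contra hcon
  have := not_nonempty_iff.1 hcon
  apply hF
  have h := Subsingleton.elim
    ((Representation.IntertwiningMap.equivLinearMapAsModule ρ σ).symm F) 0
  simpa using h

theorem irr_of_simple {G : Type} [Group G] [Fintype G] (V : FDRep ℂ G)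
    (hV : CategoryTheory.Simple V) : Representation.IsIrreducible V.ρ := by
  have := invertibleOfNonzero (NeZero.ne (Nat.card G : ℂ))
  have h1 := (FDRep.simple_iff_char_is_norm_one V).1 hV
  have h2 := Representation.card_inv_mul_sum_char_mul_char_eq_finrank V.ρ V.ρ
  have h3 : Module.finrank ℂ (Representation.IntertwiningMap V.ρ V.ρ) = 1 := by
    have : (∑ g : G, Representation.character V.ρ g * Representation.character V.ρ g⁻¹)
      = (Nat.card G : ℂ) := h1
    rw [this, inv_mul_cancel_of_invertible] at h2
    exact_mod_cast h2.symm
  rw [(Representation.IntertwiningMap.equivLinearMapAsModule V.ρ V.ρ).finrank_eq] at h3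
  rw [Representation.irreducible_iff_isSimpleModule_asModule]
  set M := Representation.asModule V.ρ
  have hnt : Nontrivial M := by
    by_contra hcon
    rw [not_nontrivial_iff_subsingleton] at hcon
    have : Subsingleton (M →ₗ[MonoidAlgebra ℂ G] M) := ⟨fun f g => by ext x; exact hcon.elim _ _⟩
    rw [Module.finrank_zero_of_subsingleton] at h3
    omega
  have hid : (LinearMap.id : M →ₗ[MonoidAlgebra ℂ G] M) ≠ 0 := by
    obtain ⟨x, hx⟩ := exists_ne (0 : M)
    intro h
    exact hx (LinearMap.congr_fun h x)
  rw [isSimpleModule_iff]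
  refine { toNontrivial := inferInstance, eq_bot_or_eq_top := fun N => ?_ }
  obtain ⟨N', hN⟩ := MonoidAlgebra.Submodule.exists_isCompl (k := ℂ) N
  obtain ⟨c, hc⟩ := (finrank_eq_one_iff_of_nonzero' _ hid).1 h3
    (N.subtype ∘ₗ Submodule.projectionOnto N N' hN)
  by_cases hc0 : c = 0
  · left
    rw [eq_bot_iff]
    intro x hx
    have h := LinearMap.congr_fun hc x
    have h' := Submodule.projectionOnto_apply_left hN ⟨x, hx⟩
    rw [hc0, zero_smul, LinearMap.comp_apply] at h
    have h4 := congrArg N.subtype h'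
    exact h4.symm.trans h.symm
  · right
    rw [eq_top_iff]
    intro x _
    have h := LinearMap.congr_fun hc x
    rw [LinearMap.comp_apply] at h
    have h4 : c • x ∈ N := by
      have h5 : c • x = N.subtype (Submodule.projectionOnto N N' hN x) := h
      rw [h5]
      exact (Submodule.projectionOnto N N' hN x).2
    have h6 := N.smul_of_tower_mem (c⁻¹) h4
    rwa [smul_smul, inv_mul_cancel₀ hc0, one_smul] at h6

theorem simple_of_irr {G : Type} [Group G] [Fintype G] {W : Type} [AddCommGroup W] [Module ℂ W]
    [FiniteDimensional ℂ W] (ρ : Representation ℂ G W) [ρ.IsIrreducible] :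
    CategoryTheory.Simple (FDRep.of ρ) := by
  have := invertibleOfNonzero (NeZero.ne (Nat.card G : ℂ))
  rw [FDRep.simple_iff_char_is_norm_one]
  have h := Representation.char_orthonormal ρ ρ
  rw [if_pos ⟨Representation.Equiv.refl ρ⟩] at h
  have h2 : (∑ g : G, (FDRep.of ρ).character g * (FDRep.of ρ).character g⁻¹)
    = ∑ g : G, ρ.character g * ρ.character g⁻¹ := rfl
  rw [h2]
  rw [inv_mul_eq_iff_eq_mul₀ (NeZero.ne (Nat.card G : ℂ))] at h
  simpa using h

theorem iso_of_equiv {G : Type} [Group G] [Fintype G] (V W : FDRep ℂ G)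
    [CategoryTheory.Simple V] [CategoryTheory.Simple W]
    [Representation.IsIrreducible V.ρ] [Representation.IsIrreducible W.ρ]
    (e : Nonempty (Representation.Equiv W.ρ V.ρ)) : Nonempty (V ≅ W) := by
  have := invertibleOfNonzero (NeZero.ne (Nat.card G : ℂ))
  have h := Representation.char_orthonormal V.ρ W.ρ
  have h2 := FDRep.char_orthonormal V W
  rw [if_pos e] at h
  by_contra hcon
  rw [if_neg hcon] at h2
  have h3 := h.symm.trans h2
  simp at h3

theorem asAlgebraHom_ofModule' {G : Type} [Group G] (N : Type) [AddCommGroup N] [Module ℂ N]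
    [Module (MonoidAlgebra ℂ G) N] [IsScalarTower ℂ (MonoidAlgebra ℂ G) N]
    (r : MonoidAlgebra ℂ G) (x : N) :
    (Representation.ofModule' (k := ℂ) (G := G) N).asAlgebraHom r x = r • x := by
  have : (Representation.ofModule' (k := ℂ) (G := G) N).asAlgebraHom = Algebra.lsmul ℂ ℂ N :=
    (MonoidAlgebra.lift ℂ (Module.End ℂ N) G).apply_symm_apply _
  rw [this]; rfl

theorem exists_irr_aux {G : Type} [Group G] [Fintype G] (N : Type) [AddCommGroup N]
    [Module ℂ N] [Module (MonoidAlgebra ℂ G) N] [IsScalarTower ℂ (MonoidAlgebra ℂ G) N]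
    [FiniteDimensional ℂ N]
    (hN : IsSimpleModule (MonoidAlgebra ℂ G) N)
    (c : MonoidAlgebra ℂ G) (x : N) (hx : c • x ≠ 0) :
    ∃ V : FDRep ℂ G, CategoryTheory.Simple V ∧ Representation.asAlgebraHom V.ρ c ≠ 0 := by
  let ρ := Representation.ofModule' (k := ℂ) (G := G) N
  let e : ρ.asModule ≃ₗ[MonoidAlgebra ℂ G] N :=
    { ρ.asModuleEquiv.toAddEquiv with
      map_smul' := fun r y =>
        (ρ.asModuleEquiv_map_smul r y).trans (asAlgebraHom_ofModule' N r _) }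
  have hirr : ρ.IsIrreducible := by
    rw [Representation.irreducible_iff_isSimpleModule_asModule]
    exact IsSimpleModule.congr e
  refine ⟨FDRep.of ρ, simple_of_irr _, ?_⟩
  intro h
  have h1 : ρ.asAlgebraHom c x = 0 := LinearMap.congr_fun h _
  exact hx ((asAlgebraHom_ofModule' N c x).symm.trans h1)

theorem exists_irr {G : Type} [Group G] [Fintype G] (c : MonoidAlgebra ℂ G) (hc : c ≠ 0) :
    ∃ V : FDRep ℂ G, CategoryTheory.Simple V ∧ Representation.asAlgebraHom V.ρ c ≠ 0 := by
  have : ∃ N : Submodule (MonoidAlgebra ℂ G) (MonoidAlgebra ℂ G), IsSimpleModule (MonoidAlgebra ℂ G) N ∧ ∃ x ∈ N, c * x ≠ 0 := by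
    by_contra hcon
    push Not at hcon
    let T : Submodule (MonoidAlgebra ℂ G) (MonoidAlgebra ℂ G) :=
      { carrier := {x | ∀ r : (MonoidAlgebra ℂ G), c * (r * x) = 0}
        zero_mem' := by intro r; simp
        add_mem' := by
          intro x y hx hy r
          rw [mul_add, mul_add, hx r, hy r, add_zero]
        smul_mem' := by
          intro s x hx r
          have := hx (r * s)
          rwa [smul_eq_mul, ← mul_assoc r s x] }
    have hT : T = ⊤ := by
      rw [eq_top_iff, ← IsSemisimpleModule.sSup_simples_eq_top (MonoidAlgebra ℂ G) (MonoidAlgebra ℂ G)]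
      refine sSup_le fun N hN x hx r => ?_
      exact hcon N hN (r * x) (N.smul_mem r hx)
    have h1 : (1 : (MonoidAlgebra ℂ G)) ∈ T := by rw [hT]; trivial
    have := h1 1
    apply hc
    simpa using this
  obtain ⟨N, hN, x, hxN, hx⟩ := this
  have hfin : FiniteDimensional ℂ N :=
    Module.Finite.of_injective (N.subtype.restrictScalars ℂ) N.subtype_injective
  exact exists_irr_aux N hN c ⟨x, hxN⟩ (fun h => hx (congrArg Subtype.val h))

theorem hab_young (n : ℕ) (lam : YoungDiagram) (hlam : lam.card = n)
    (x : MonoidAlgebra ℂ (Equiv.Perm (Fin n))) :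
    ∃ s : ℂ, sgSum (youngH n lam) 1 * x * sgSum (youngV n lam) Equiv.Perm.sign =
      s • (sgSum (youngH n lam) 1 * sgSum (youngV n lam) Equiv.Perm.sign) := by
  induction x using MonoidAlgebra.induction_linear with
  | zero => exact ⟨0, by simp⟩
  | add x y hx hy =>
    obtain ⟨s, hs⟩ := hx
    obtain ⟨t, ht⟩ := hy
    exact ⟨s + t, by rw [mul_add, add_mul, hs, ht, add_smul]⟩
  | single g z =>
    set a := sgSum (youngH n lam) 1 with ha
    set b := sgSum (youngV n lam) Equiv.Perm.sign with hb
    have hz : MonoidAlgebra.single g z = z • MonoidAlgebra.single g (1 : ℂ) := by simp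
    suffices h : ∃ s : ℂ, a * MonoidAlgebra.single g 1 * b = s • (a * b) by
      obtain ⟨s, hs⟩ := h
      exact ⟨z * s, by rw [hz, mul_smul_comm, smul_mul_assoc, hs, smul_smul]⟩
    by_cases hg : ∀ x y : Fin n, x ≠ y → colIndex lam x = colIndex lam y →
      rowIndex lam (g x) ≠ rowIndex lam (g y)
    · obtain ⟨h, hh, v, hv, rfl⟩ := von_neumann n lam hlam g hg
      refine ⟨((Equiv.Perm.sign v : ℤˣ) : ℤ), ?_⟩
      have : MonoidAlgebra.single (h * v) (1 : ℂ)
        = MonoidAlgebra.single h 1 * MonoidAlgebra.single v 1 := by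
          simp [MonoidAlgebra.single_mul_single]
      rw [this, ← mul_assoc, sgSum_mul_single _ _ h hh, mul_assoc, single_mul_sgSum _ _ v hv]
      simp [ha, hb]
    · push Not at hg
      obtain ⟨x, y, hxy, hc, hr⟩ := hg
      refine ⟨0, ?_⟩
      have hv := swap_mem_V n lam x y hc
      have hh := swap_mem_H n lam (g x) (g y) hr
      have e1 := single_mul_sgSum _ Equiv.Perm.sign _ hv
      have e2 := sgSum_mul_single _ 1 _ hh
      rw [← ha] at e2
      rw [← hb, Equiv.Perm.sign_swap hxy] at e1
      have e3 : MonoidAlgebra.single (Equiv.swap (g x) (g y)) (1 : ℂ) * MonoidAlgebra.single g 1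
          = MonoidAlgebra.single g 1 * MonoidAlgebra.single (Equiv.swap x y) 1 := by
        simp only [MonoidAlgebra.single_mul_single, mul_one]
        rw [Equiv.mul_swap_eq_swap_mul]
      have e4 : a * MonoidAlgebra.single g 1 * b = - (a * MonoidAlgebra.single g 1 * b) := by
        calc a * MonoidAlgebra.single g 1 * b
            = (a * MonoidAlgebra.single (Equiv.swap (g x) (g y)) (1 : ℂ))
                * MonoidAlgebra.single g 1 * b := by rw [e2]; simp
          _ = a * MonoidAlgebra.single g 1 * (MonoidAlgebra.single (Equiv.swap x y) 1 * b) := by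
              rw [mul_assoc a, e3]; simp only [mul_assoc]
          _ = - (a * MonoidAlgebra.single g 1 * b) := by rw [e1]; simp
      rw [zero_smul]
      have e5 : (2 : ℂ) • (a * MonoidAlgebra.single g 1 * b) = 0 := by
        rw [two_smul]; nth_rewrite 1 [e4]; simp
      have e6 := congrArg (fun z => (2⁻¹ : ℂ) • z) e5
      simpa only [smul_smul, inv_mul_cancel₀ (two_ne_zero : (2 : ℂ) ≠ 0), one_smul, smul_zero]
        using e6

theorem ab_ne_zero (n : ℕ) (lam : YoungDiagram) (hlam : lam.card = n) :
    sgSum (youngH n lam) 1 * sgSum (youngV n lam) Equiv.Perm.sign ≠ 0 := by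
  intro h
  have h1 : (∑ v : youngV n lam, ∑ h : youngH n lam,
      if (h : Equiv.Perm (Fin n)) * v = 1 then
        (((Equiv.Perm.sign (v : Equiv.Perm (Fin n)) : ℤˣ) : ℤ) : ℂ) else 0) = 0 := by
    have := congrArg (fun z => z.coeff (1 : Equiv.Perm (Fin n))) h
    simpa [sgSum, Finset.sum_mul, Finset.mul_sum, MonoidAlgebra.single_mul_single,
      Finsupp.single_apply, Finsupp.finsetSum_apply] using this
  have h2 : ∀ (h : youngH n lam) (v : youngV n lam), (h : Equiv.Perm (Fin n)) * v = 1 ↔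
      h = 1 ∧ v = 1 := by
    intro h v
    constructor
    · intro e
      have hv : (v : Equiv.Perm (Fin n)) = 1 := by
        apply H_inf_V n lam hlam _ _ v.2
        rw [eq_inv_of_mul_eq_one_right e]
        exact inv_mem h.2
      refine ⟨?_, Subtype.ext hv⟩
      rw [hv, mul_one] at e
      exact Subtype.ext e
    · rintro ⟨rfl, rfl⟩; simp
  simp [h2, ite_and] at h1


theorem frobenius_young (n : ℕ) (hn : 1 ≤ n) (lam : YoungDiagram) (hlam : lam.card = n) :
    ∃ V : FDRep ℂ (Equiv.Perm (Fin n)), CategoryTheory.Simple V ∧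
      innerChar (indTrivChar (youngH n lam)) V.character = 1 ∧
      innerChar (indSgnChar (youngV n lam)) V.character = 1 ∧
      ∀ W : FDRep ℂ (Equiv.Perm (Fin n)), CategoryTheory.Simple W →
        innerChar (indTrivChar (youngH n lam)) W.character ≠ 0 →
        innerChar (indSgnChar (youngV n lam)) W.character ≠ 0 →
        Nonempty (V ≅ W) := by
  have hab := hab_young n lam hlam
  obtain ⟨V, hV, hVc⟩ := exists_irr _ (ab_ne_zero n lam hlam)
  set a := sgSum (youngH n lam) 1 with ha
  set b := sgSum (youngV n lam) Equiv.Perm.sign with hb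
  have hirr := irr_of_simple V hV
  have hVa : Representation.asAlgebraHom V.ρ a ≠ 0 := by
    intro h; apply hVc; rw [map_mul, h, zero_mul]
  have hVb : Representation.asAlgebraHom V.ρ b ≠ 0 := by
    intro h; apply hVc; rw [map_mul, h, mul_zero]
  have hr := ranks V.ρ a b hab hVa hVb
  refine ⟨V, hV, ?_, ?_, ?_⟩
  · rw [indTriv_eq, inner_indEps, ← ha, hr.1, Nat.cast_one]
  · rw [indSgn_eq, inner_indEps, ← hb, hr.2, Nat.cast_one]
  · intro W hW h1 h2
    have hirr' := irr_of_simple W hW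
    rw [indTriv_eq, inner_indEps, ← ha] at h1
    rw [indSgn_eq, inner_indEps, ← hb] at h2
    have hWa : Representation.asAlgebraHom W.ρ a ≠ 0 := by
      intro h; apply h1; rw [h, LinearMap.range_zero, finrank_bot, Nat.cast_zero]
    have hWb : Representation.asAlgebraHom W.ρ b ≠ 0 := by
      intro h; apply h2; rw [h, LinearMap.range_zero, finrank_bot, Nat.cast_zero]
    exact iso_of_equiv V W (exists_equiv W.ρ V.ρ a b hab hWa hWb hVa hVb)

end
end

section
/- Let G be a finite group, H and K subgroups of G, and χ the character of a finite-dimensional complex representation of H. For s ∈ G set H_s = sHs⁻¹ ∩ K and define χ_s on H_s by χ_s(x) = χ(s⁻¹xs). Then for any complete set S of representatives of the double cosets K\G/H and every g ∈ K, one has (Ind_H^G χ)(g) = Σ_{s ∈ S} (Ind_{H_s}^K χ_s)(g). (Mackey's formula: the restriction to K of the representation induced from H decomposes as the sum over double cosets of the representations induced from the conjugated representations on H_s.) -/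
open scoped Classical

noncomputable section

open MvPolynomial

/-- The class function induced from a class function `χ` on a subgroup `H`:
`(Ind_H^G χ)(g) = (1/|H|) Σ_{x : x⁻¹gx ∈ H} χ(x⁻¹gx)`. -/
noncomputable def indClassFn {G : Type} [Group G] [Fintype G] (H : Subgroup G)
    (chi : H → ℂ) (g : G) : ℂ :=
  (Nat.card H : ℂ)⁻¹ * ∑ x : G, if h : x⁻¹ * g * x ∈ H then chi ⟨x⁻¹ * g * x, h⟩ else 0

/-- The subgroup `H_s = sHs⁻¹ ∩ K`, realized as a subgroup of `K`
(note `x ∈ sHs⁻¹ ↔ s⁻¹xs ∈ H`). -/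
def mackeySubgroup {G : Type} [Group G] (H K : Subgroup G) (s : G) : Subgroup K where
  carrier := {x : K | s⁻¹ * (x : G) * s ∈ H}
  one_mem' := by simpa using one_mem H
  mul_mem' := by
    intro a b ha hb
    simp only [Set.mem_setOf_eq, Subgroup.coe_mul] at *
    have h : s⁻¹ * ((a : G) * (b : G)) * s = (s⁻¹ * (a : G) * s) * (s⁻¹ * (b : G) * s) := by
      group
    rw [h]
    exact mul_mem ha hb
  inv_mem' := by
    intro a ha
    simp only [Set.mem_setOf_eq, Subgroup.coe_inv] at *
    have h : s⁻¹ * ((a : G))⁻¹ * s = (s⁻¹ * (a : G) * s)⁻¹ := by group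
    rw [h]
    exact inv_mem ha

lemma mackey_fiber {G : Type} [Group G] [Fintype G] (H K : Subgroup G) (s x : G)
    (hx : ∃ k ∈ K, ∃ h ∈ H, x = k * s * h) :
    (Finset.univ.filter (fun p : K × H => (p.1 : G) * s * p.2 = x)).card
      = Nat.card (mackeySubgroup H K s) := by
  obtain ⟨k0, hk0, h0, hh0, rfl⟩ := hx
  rw [Nat.card_eq_fintype_card, ← Finset.card_univ]
  symm
  refine Finset.card_bij
    (fun t _ => ((⟨k0, hk0⟩ : K) * t.1, (⟨s⁻¹ * ((t.1 : K) : G) * s, t.2⟩ : H)⁻¹ * ⟨h0, hh0⟩))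
    ?_ ?_ ?_
  · intro t _
    simp only [Finset.mem_filter, Finset.mem_univ, true_and, Subgroup.coe_mul, Subgroup.coe_inv]
    group
  · intro a _ b _ hab
    exact Subtype.ext (mul_left_cancel (Prod.ext_iff.1 hab).1)
  · rintro ⟨k, h⟩ hp
    simp only [Finset.mem_filter, Finset.mem_univ, true_and] at hp
    have e : s⁻¹ * (k0⁻¹ * (k : G)) * s = h0 * (h : G)⁻¹ := by
      have : (k : G) = k0 * s * h0 * (h : G)⁻¹ * s⁻¹ := by rw [← hp]; group
      rw [this]; group
    refine ⟨⟨(⟨k0, hk0⟩ : K)⁻¹ * k, ?_⟩, Finset.mem_univ _, ?_⟩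
    · change s⁻¹ * (k0⁻¹ * (k : G)) * s ∈ H
      rw [e]
      exact mul_mem hh0 (inv_mem h.2)
    · refine Prod.ext ?_ ?_
      · simp
      · apply Subtype.ext
        change (s⁻¹ * (k0⁻¹ * (k : G)) * s)⁻¹ * h0 = h
        rw [e]; group

lemma mackey_coset {G : Type} [Group G] [Fintype G] (H K : Subgroup G) (s : G)
    (F : G → ℂ) (hF : ∀ x, ∀ h ∈ H, F (x * h) = F x) :
    (Nat.card (mackeySubgroup H K s) : ℂ)⁻¹ * ∑ k : K, F (k * s) =
      (Nat.card H : ℂ)⁻¹ * ∑ x : G, if (∃ k ∈ K, ∃ h ∈ H, x = k * s * h) then F x else 0 := by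
  have h1 : ∑ p : K × H, F (p.1 * s * p.2) = (Nat.card H : ℂ) * ∑ k : K, F (k * s) := by
    rw [Fintype.sum_prod_type, Finset.mul_sum]
    refine Finset.sum_congr rfl fun k _ => ?_
    rw [Finset.sum_congr rfl (fun (h : H) _ => hF (k * s) (h : G) h.2)]
    simp
  have h2 : ∑ p : K × H, F (p.1 * s * p.2) = (Nat.card (mackeySubgroup H K s) : ℂ) *
      ∑ x : G, if (∃ k ∈ K, ∃ h ∈ H, x = k * s * h) then F x else 0 := by
    rw [← Finset.sum_fiberwise (s := Finset.univ) (g := fun p : K × H => (p.1 : G) * s * p.2),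
      Finset.mul_sum]
    refine Finset.sum_congr rfl fun x _ => ?_
    rw [Finset.sum_congr rfl (g := fun _ => F x)
      (fun p hp => by rw [(Finset.mem_filter.1 hp).2])]
    rw [Finset.sum_const, nsmul_eq_mul]
    split_ifs with hx
    · rw [mackey_fiber H K s x hx]
    · rw [Finset.filter_eq_empty_iff.2]
      · simp
      · rintro ⟨k, h⟩ _ e
        exact hx ⟨k, k.2, h, h.2, e.symm⟩
  have c1 : (Nat.card H : ℂ) ≠ 0 := by exact_mod_cast Nat.card_pos.ne'
  have c2 : (Nat.card (mackeySubgroup H K s) : ℂ) ≠ 0 := by exact_mod_cast Nat.card_pos.ne'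
  have := h1.symm.trans h2
  rw [inv_mul_eq_iff_eq_mul₀ c2, mul_left_comm, ← this, inv_mul_cancel_left₀ c1]

/-- **Mackey's formula.** For subgroups `H, K` of a finite group `G`, the character `χ` of a
finite-dimensional complex representation `ρ` of `H`, and a complete set `S` of
representatives of the double cosets `K\G/H`, the restriction to `K` of the induced
character satisfies `(Ind_H^G χ)(g) = Σ_{s ∈ S} (Ind_{H_s}^K χ_s)(g)` for every `g ∈ K`,
where `H_s = sHs⁻¹ ∩ K` and `χ_s(x) = χ(s⁻¹xs)`. -/
theorem mackey_formula {G : Type} [Group G] [Fintype G] (H K : Subgroup G)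
    (rho : FDRep ℂ H) (S : Finset G)
    (hS : ∀ g : G, ∃! s, s ∈ S ∧ ∃ k ∈ K, ∃ h ∈ H, g = k * s * h) (g : K) :
    indClassFn H rho.character (g : G) =
      ∑ s ∈ S, indClassFn (mackeySubgroup H K s)
        (fun x => rho.character ⟨s⁻¹ * ((x : K) : G) * s, x.2⟩) g := by
  set F : G → ℂ := fun x => if h : x⁻¹ * (g : G) * x ∈ H then
    rho.character ⟨x⁻¹ * (g : G) * x, h⟩ else 0 with hFdef
  have hF : ∀ x, ∀ h ∈ H, F (x * h) = F x := by
    intro x h hh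
    have e : (x * h)⁻¹ * (g : G) * (x * h) = h⁻¹ * (x⁻¹ * (g : G) * x) * h := by group
    simp only [hFdef]
    by_cases hx : x⁻¹ * (g : G) * x ∈ H
    · have hx' : (x * h)⁻¹ * (g : G) * (x * h) ∈ H := by
        rw [e]; exact mul_mem (mul_mem (inv_mem hh) hx) hh
      rw [dif_pos hx, dif_pos hx']
      have := FDRep.char_conj rho ⟨x⁻¹ * (g : G) * x, hx⟩ (⟨h, hh⟩ : H)⁻¹
      rw [← this]
      congr 1
      apply Subtype.ext
      simp [mul_assoc]
    · have hx' : ¬ (x * h)⁻¹ * (g : G) * (x * h) ∈ H := by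
        rw [e]
        intro hc
        apply hx
        have := mul_mem (mul_mem hh hc) (inv_mem hh)
        convert this using 1
        group
      rw [dif_neg hx, dif_neg hx']
  have key : ∀ s ∈ S, indClassFn (mackeySubgroup H K s)
        (fun x => rho.character ⟨s⁻¹ * ((x : K) : G) * s, x.2⟩) g =
      (Nat.card H : ℂ)⁻¹ * ∑ x : G, if (∃ k ∈ K, ∃ h ∈ H, x = k * s * h) then F x else 0 := by
    intro s _
    rw [← mackey_coset H K s F hF]
    unfold indClassFn
    congr 1
    refine Finset.sum_congr rfl fun k _ => ?_
    have e : ((k : G) * s)⁻¹ * (g : G) * (k * s) = s⁻¹ * ((k⁻¹ * g * k : K) : G) * s := by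
      simp [mul_assoc]
    simp only [hFdef]
    by_cases hk : k⁻¹ * g * k ∈ mackeySubgroup H K s
    · have hk' : ((k : G) * s)⁻¹ * (g : G) * (k * s) ∈ H := by rw [e]; exact hk
      rw [dif_pos hk, dif_pos hk']
      congr 1
      exact Subtype.ext e.symm
    · have hk' : ¬ ((k : G) * s)⁻¹ * (g : G) * (k * s) ∈ H := by rw [e]; exact hk
      rw [dif_neg hk, dif_neg hk']
  rw [Finset.sum_congr rfl key, ← Finset.mul_sum, Finset.sum_comm]
  unfold indClassFn
  congr 1
  refine Finset.sum_congr rfl fun x _ => ?_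
  obtain ⟨s, ⟨hs, hx⟩, hu⟩ := hS x
  rw [Finset.sum_eq_single s]
  · rw [if_pos hx]
  · intro b hb hbs
    rw [if_neg]
    exact fun hc => hbs (hu b ⟨hb, hc⟩)
  · exact fun h => absurd hs h

end
end
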